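/- arXiv:1701.00466 — 12 statements merged into one kernel-verified Lean document; each statement's English description precedes it below -/
import Mathlib

section
/- For soft sets F, G ∈ S(𝕏), F ⊆̃ G if and only if SE(F) ⊆ SE(G). -/
namespace SoftPaper

variable {X Y A : Type*}

/-- The set of soft elements of a soft set `F`. -/
def SE (F : A → Set X) : Set (A → X) := {x | ∀ a, x a ∈ F a}

/-- The soft set generated by a collection `B` of soft elements. -/
def SS (B : Set (A → X)) : A → Set X := fun a => {y | ∃ x ∈ B, x a = y}

/-- The null soft set Φ. -/
def Null : A → Set X := fun _ => ∅

/-- The absolute soft set 𝕏. -/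
def Abs : A → Set X := fun _ => Set.univ

/-- `F` lies in `S(𝕏)`: it is the null soft set or everywhere nonempty. -/
def MemSX (F : A → Set X) : Prop := F = Null ∨ ∀ a, (F a).Nonempty

/-- Soft subset relation `F ⊆̃ G`. -/
def Subset (F G : A → Set X) : Prop := ∀ a, F a ⊆ G a

/-- Elementary union of a family of soft sets. -/
def eUnion {ι : Type*} (F : ι → A → Set X) : A → Set X := SS (⋃ i, SE (F i))

/-- Elementary intersection of a family of soft sets. -/
def eInter {ι : Type*} (F : ι → A → Set X) : A → Set X := SS (⋂ i, SE (F i))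

/-- Binary elementary union `F ⋓ G`. -/
def eUnion2 (F G : A → Set X) : A → Set X := SS (SE F ∪ SE G)

/-- Binary elementary intersection `F ⋒ G`. -/
def eInter2 (F G : A → Set X) : A → Set X := SS (SE F ∩ SE G)

/-- Elementary complement `F^ℂ`. -/
def eCompl (F : A → Set X) : A → Set X := SS {x : A → X | ∀ a, x a ∉ F a}

theorem softSubset_iff_SE_subset [Nonempty X] [Nonempty A]
    (F G : A → Set X) (hF : MemSX F) (hG : MemSX G) :
    Subset F G ↔ SE F ⊆ SE G := by
  classical
  refine ⟨fun h x hx a => h a (hx a), fun h a y hy => ?_⟩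
  rcases hF with rfl | hne
  · exact hy.elim
  · choose x hx using hne
    -- Redirecting the soft element `x` to take the value `y` at `a` keeps it inside `F`.
    have hmem : Function.update x a y ∈ SE F := fun b => by
      by_cases hb : b = a
      · subst hb
        simpa using hy
      · simpa [hb] using hx b
    simpa using h hmem a

end SoftPaper
end

section
/- For soft sets F, G ∈ S(𝕏): (i) (F ⋓ G) a = F a ∪ G a for every a ∈ A; (ii) if F ⋒ G ≠ Φ, then (F ⋒ G) a = F a ∩ G a for every a ∈ A. -/
/-!
The values at `a` of the soft elements of `F` fill out `F a` as soon as `F` has one soft element: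
that soft element can be changed at `a` alone to take any prescribed value in `F a`
(`exists_mem_SE_apply_eq`). For the union this applies to `F` and `G` separately, each being either
null or everywhere nonempty. For the intersection it applies to the pointwise intersection
`b ↦ F b ∩ G b`, whose soft elements are exactly the common ones; the hypothesis `F ⋒ G ≠ Φ` says
that one of these exists.
-/

namespace SoftPaper

variable {X Y A : Type*}

/-- A point of `F a` extends to a soft element of `F` as soon as `F` has any soft element:
change the value of that soft element at `a` only. -/
theorem exists_mem_SE_apply_eq {F : A → Set X} {x : A → X} (hx : x ∈ SE F) {a : A} {y : X}
    (hy : y ∈ F a) : ∃ z ∈ SE F, z a = y := by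
  classical
  refine ⟨Function.update x a y, fun b => ?_, Function.update_self a y x⟩
  by_cases h : b = a
  · subst h
    simpa using hy
  · simpa [Function.update_of_ne h] using hx b

/-- A member of `S(𝕏)` is the union of the values of its soft elements. If `F = Φ` both sides are
empty; otherwise choice provides a soft element to modify. -/
theorem MemSX.exists_mem_SE_iff {F : A → Set X} (hF : MemSX F) (a : A) (y : X) :
    (∃ z ∈ SE F, z a = y) ↔ y ∈ F a := by
  constructor
  · rintro ⟨z, hz, rfl⟩
    exact hz a
  · intro hy
    rcases hF with rfl | hF
    · exact hy.elim
    · choose x hx using hF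
      exact exists_mem_SE_apply_eq hx hy

theorem eUnion2_apply_and_eInter2_apply [Nonempty X] [Nonempty A]
    (F G : A → Set X) (hF : MemSX F) (hG : MemSX G) :
    (∀ a, eUnion2 F G a = F a ∪ G a) ∧
      (eInter2 F G ≠ Null → ∀ a, eInter2 F G a = F a ∩ G a) := by
  refine ⟨fun a => ?_, fun hne a => ?_⟩
  · ext y
    rw [Set.mem_union, ← hF.exists_mem_SE_iff, ← hG.exists_mem_SE_iff]
    simp only [eUnion2, SS, Set.mem_setOf_eq, Set.mem_union, or_and_right, exists_or]
  · -- The soft elements common to `F` and `G` are those of the pointwise intersection.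
    have hSE : SE F ∩ SE G = SE (fun b => F b ∩ G b) := by
      ext x
      exact forall_and.symm
    obtain ⟨x, hx⟩ : (SE F ∩ SE G).Nonempty := by
      by_contra h
      rw [Set.not_nonempty_iff_eq_empty] at h
      apply hne
      funext b
      ext y
      simp [eInter2, SS, Null, h]
    rw [hSE] at hx
    ext y
    simp only [eInter2, SS, hSE, Set.mem_setOf_eq]
    constructor
    · rintro ⟨z, hz, rfl⟩
      exact hz a
    · exact fun hy => exists_mem_SE_apply_eq hx hy

end SoftPaper
end

section
/- For any soft set F ∈ S(𝕏): F^ℂ a ⊆ (F a)ᶜ for every a ∈ A; moreover, if F^ℂ ≠ Φ, then F^ℂ a = (F a)ᶜ for every a ∈ A. -/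
/-!
The inclusion holds because every soft element generating `F^ℂ` avoids `F` at each parameter.
If `F^ℂ ≠ Φ`, some soft element `x` avoids `F` everywhere; given `y ∉ F a`, changing the value
of `x` at `a` to `y` yields a soft element that still avoids `F`, so `y ∈ F^ℂ a`.
-/

namespace SoftPaper

variable {X Y A : Type*}

theorem eCompl_subset_compl [Nonempty X] [Nonempty A]
    (F : A → Set X) (hF : MemSX F) :
    (∀ a, eCompl F a ⊆ (F a)ᶜ) ∧
      (eCompl F ≠ Null → ∀ a, eCompl F a = (F a)ᶜ) := by
  classical
  have hsub : ∀ a, eCompl F a ⊆ (F a)ᶜ := by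
    rintro a _ ⟨x, hx, rfl⟩
    exact hx a
  refine ⟨hsub, fun hne a => (hsub a).antisymm fun y hy => ?_⟩
  obtain ⟨x, hx⟩ : ∃ x : A → X, ∀ b, x b ∉ F b := by
    by_contra h
    refine hne (funext fun b => Set.eq_empty_iff_forall_notMem.2 ?_)
    rintro _ ⟨x, hx, -⟩
    exact h ⟨x, hx⟩
  -- Redirect the soft element `x` avoiding `F` to take the value `y` at `a`.
  refine ⟨Function.update x a y, fun b => ?_, Function.update_self a y x⟩
  rcases eq_or_ne b a with rfl | hb
  · simpa using hy
  · simpa [hb] using hx b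

end SoftPaper
end

section
/- For any soft set F ∈ S(𝕏): (i) F ⋒ F^ℂ = Φ; (ii) F ⋓ F^ℂ ⊆̃ 𝕏 always, and if F^ℂ ≠ Φ then F ⋓ F^ℂ = 𝕏. -/
/-!
A function `x` is a soft element of `eCompl F` exactly when `x a ∉ F a` for every `a`, so `SE F` and
`SE (eCompl F)` have no common member once `A` is nonempty. If `eCompl F` is not null, there is a
function `x` avoiding `F` at every parameter; and if `F` is not null, there is a soft element `f` of
`F`. Given a point `y` and a parameter `a`, changing the value at `a` of `f` (when `y ∈ F a`) or of
`x` (when `y ∉ F a`) to `y` gives a soft element of `F` or of `eCompl F` through `y`.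
-/

namespace SoftPaper

variable {X Y A : Type*}

/-- Changing one value of a soft element of `F` within `F` gives a soft element of `F`. -/
theorem update_mem_SE [DecidableEq A] {F : A → Set X} {x : A → X} (hx : x ∈ SE F) {a : A} {y : X}
    (hy : y ∈ F a) : Function.update x a y ∈ SE F := by
  intro b
  rcases eq_or_ne b a with rfl | h
  · simpa using hy
  · simpa [h] using hx b

theorem mem_SE_eCompl {F : A → Set X} {x : A → X} : x ∈ SE (eCompl F) ↔ ∀ a, x a ∉ F a := by
  constructor
  · intro hx a
    obtain ⟨z, hz, hza⟩ := hx a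
    exact hza ▸ hz a
  · intro hx a
    exact ⟨x, hx, rfl⟩

/-- A non-null elementary complement is witnessed by a function avoiding `F` everywhere. -/
theorem exists_forall_notMem {F : A → Set X} (h : eCompl F ≠ Null) :
    ∃ x : A → X, ∀ a, x a ∉ F a := by
  by_contra! hn
  refine h (funext fun a => Set.eq_empty_iff_forall_notMem.2 ?_)
  rintro y ⟨x, hx, -⟩
  obtain ⟨b, hb⟩ := hn x
  exact hx b hb

theorem eInter2_eCompl_and_eUnion2_eCompl [Nonempty X] [Nonempty A]
    (F : A → Set X) (hF : MemSX F) :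
    eInter2 F (eCompl F) = Null ∧
      Subset (eUnion2 F (eCompl F)) Abs ∧
      (eCompl F ≠ Null → eUnion2 F (eCompl F) = Abs) := by
  classical
  refine ⟨?_, fun a => Set.subset_univ _, fun hc => ?_⟩
  · refine funext fun a => Set.eq_empty_iff_forall_notMem.2 ?_
    rintro y ⟨x, ⟨hx, hx'⟩, -⟩
    exact mem_SE_eCompl.1 hx' a (hx a)
  · obtain ⟨x, hx⟩ := exists_forall_notMem hc
    refine funext fun a => Set.eq_univ_of_forall fun y => ?_
    by_cases hy : y ∈ F a
    · have hne : ∀ b, (F b).Nonempty := by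
        rcases hF with rfl | h
        · exact absurd hy (Set.notMem_empty y)
        · exact h
      choose f hf using hne
      exact ⟨Function.update f a y, Or.inl (update_mem_SE hf hy), Function.update_self ..⟩
    · -- The avoiding functions are the soft elements of the pointwise complement of `F`.
      have hu : Function.update x a y ∈ SE fun b => (F b)ᶜ :=
        update_mem_SE (F := fun b => (F b)ᶜ) hx hy
      exact ⟨Function.update x a y, Or.inr (mem_SE_eCompl.2 hu), Function.update_self ..⟩

end SoftPaper
end

section
/- Let (𝓑ᵢ)_{i∈ι} be a family of sets of soft elements (each 𝓑ᵢ ⊆ (A → X)) and set Yᵢ := SS(𝓑ᵢ). Then ⋓ᵢ Yᵢ = SS(⋃ᵢ 𝓑ᵢ). -/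
namespace SoftPaper

variable {X Y A : Type*}

theorem eUnion_SS [Nonempty X] [Nonempty A] {ι : Type*}
    (B : ι → Set (A → X)) :
    eUnion (fun i => SS (B i)) = SS (⋃ i, B i) := by
  funext a
  ext y
  constructor
  · rintro ⟨x, hx, rfl⟩
    obtain ⟨i, hi⟩ := Set.mem_iUnion.1 hx
    -- `x` need not lie in `B i`, but some member of `B i` agrees with it at `a`.
    obtain ⟨z, hz, hza⟩ := hi a
    exact ⟨z, Set.mem_iUnion.2 ⟨i, hz⟩, hza⟩
  · rintro ⟨x, hx, rfl⟩
    obtain ⟨i, hi⟩ := Set.mem_iUnion.1 hx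
    exact ⟨x, Set.mem_iUnion.2 ⟨i, fun _ => ⟨x, hi, rfl⟩⟩, rfl⟩

end SoftPaper
end

section
/- Let (Yᵢ)_{i∈ι} be a family of soft sets, each lying in S(𝕏). Then the elementary intersection ⋒ᵢ Yᵢ equals the pointwise intersection a ↦ ⋂ᵢ Yᵢ a if and only if the pointwise intersection a ↦ ⋂ᵢ Yᵢ a lies in S(𝕏). -/
/-! The soft elements common to all `Y i` are exactly the soft elements of the pointwise
intersection (`iInter_SE`), so the elementary intersection is the soft set generated by the soft
elements of the pointwise intersection. A soft set is recovered from its soft elements exactly when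
it lies in `S(𝕏)` (`SS_SE_eq_iff`). -/

namespace SoftPaper

variable {X Y A : Type*}

/-- A soft set is generated by its own soft elements exactly when it lies in `S(𝕏)`: once every
`F a` is nonempty, any prescribed value `y ∈ F a` extends by choice to a soft element of `F`, while
a single soft element already makes every `F a` nonempty. -/
theorem SS_SE_eq_iff (F : A → Set X) : SS (SE F) = F ↔ MemSX F := by
  constructor
  · intro h
    by_cases hne : (SE F).Nonempty
    · obtain ⟨x, hx⟩ := hne
      exact Or.inr fun a => ⟨x a, hx a⟩
    · left
      rw [← h, Set.not_nonempty_iff_eq_empty.mp hne]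
      funext a
      simp [SS, Null]
  · rintro (rfl | h)
    · funext a
      ext y
      simp only [SS, SE, Null, Set.mem_setOf_eq, Set.mem_empty_iff_false, iff_false]
      rintro ⟨x, hx, -⟩
      exact hx a
    · classical
      choose x hx using h
      funext a
      ext y
      constructor
      · rintro ⟨z, hz, rfl⟩
        exact hz a
      · intro hy
        refine ⟨Function.update x a y, fun b => ?_, Function.update_self a y x⟩
        by_cases hb : b = a
        · subst hb
          simpa using hy
        · simpa [hb] using hx b

theorem iInter_SE {ι : Type*} (Y : ι → A → Set X) :
    ⋂ i, SE (Y i) = SE (fun a => ⋂ i, Y i a) := by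
  ext x
  simp only [SE, Set.mem_iInter, Set.mem_setOf_eq]
  exact forall_comm

theorem eInter_eq_pointwise_iff [Nonempty X] [Nonempty A] {ι : Type*}
    (Y : ι → A → Set X) (hY : ∀ i, MemSX (Y i)) :
    eInter Y = (fun a => ⋂ i, Y i a) ↔ MemSX (fun a => ⋂ i, Y i a) := by
  rw [eInter, iInter_SE]
  exact SS_SE_eq_iff _

end SoftPaper
end

section
/- Let F be a soft set such that both F and its pointwise complement Fᶜ (given by a ↦ (F a)ᶜ) lie in S(𝕏). Then F^ℂ = Fᶜ and (F^ℂ)^ℂ = F. -/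
/-!
The elementary complement of `F` is `SS (SE Fᶜ)`, where `Fᶜ` is the pointwise complement. Every
soft set `G` in `S(𝕏)` is recovered from its soft elements, `SS (SE G) = G`: when all `G a` are
nonempty, a point of `G a` extends to a soft element by choosing points in the other values.
Applying this to `Fᶜ` and then to `Fᶜᶜ = F` gives both equalities.
-/

namespace SoftPaper

variable {X Y A : Type*}

/-- A member of `S(𝕏)` is generated by its own soft elements. -/
theorem SS_SE_of_memSX (G : A → Set X) (hG : MemSX G) : SS (SE G) = G := by
  classical
  funext a
  ext y
  constructor
  · rintro ⟨x, hx, rfl⟩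
    exact hx a
  · intro hy
    rcases hG with rfl | hG
    · exact hy.elim
    · choose x hx using hG
      -- Change the value at `a` of an arbitrary soft element to `y`.
      refine ⟨Function.update x a y, fun b => ?_, Function.update_self a y x⟩
      by_cases hb : b = a
      · subst hb
        simpa using hy
      · simpa [hb] using hx b

theorem eCompl_eq_compl_and_eCompl_eCompl [Nonempty X] [Nonempty A]
    (F : A → Set X) (hF : MemSX F) (hFc : MemSX (fun a => (F a)ᶜ)) :
    eCompl F = (fun a => (F a)ᶜ) ∧ eCompl (eCompl F) = F := by
  have h : eCompl F = (fun a => (F a)ᶜ) := SS_SE_of_memSX _ hFc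
  refine ⟨h, ?_⟩
  have h' : eCompl (fun a => (F a)ᶜ) = SS (SE F) := by
    simp [eCompl, SE]
  rw [h, h', SS_SE_of_memSX F hF]

end SoftPaper
end

section
/- Let τ be a soft topology on (X, A). Then: (i) Φ and 𝕏 are soft closed; (ii) for any family (Yᵢ)_{i∈ι} of soft closed sets, the elementary intersection ⋒ᵢ Yᵢ is soft closed. -/
/-!
On soft sets of `S(𝕏)` the elementary operations are the pointwise ones: through every point of an
everywhere nonempty soft set passes a soft element (`exists_mem_SE`), so `SS (SE F) = F`. Hence
`F` is soft closed iff `F ∈ S(𝕏)` and its pointwise complement is soft open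
(`softClosed_iff`), and a soft topology is closed under pointwise unions (`iUnion_mem`). An
elementary intersection is either null or the pointwise intersection (`eInter_eq`); in the second
case its complement is, by De Morgan, a pointwise union of soft open sets.
-/

namespace SoftPaper

variable {X Y A : Type*}

/-- A soft topology on `(X, A)`: a collection of soft sets, each in `S(𝕏)`,
containing `Φ` and `𝕏`, closed under elementary unions of arbitrary families of
members and under binary elementary intersections. -/
structure IsSoftTopology (τ : Set (A → Set X)) : Prop where
  memSX : ∀ F ∈ τ, MemSX F
  null_mem : Null ∈ τ
  abs_mem : Abs ∈ τ
  union_mem : ∀ S ⊆ τ, SS (⋃ F ∈ S, SE F) ∈ τ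
  inter_mem : ∀ F ∈ τ, ∀ G ∈ τ, eInter2 F G ∈ τ

/-- `F` is soft closed w.r.t. `τ`. -/
def SoftClosed (τ : Set (A → Set X)) (F : A → Set X) : Prop :=
  MemSX F ∧ MemSX (fun a => (F a)ᶜ) ∧ eCompl F ∈ τ

/-- The soft closure of `F`: the elementary intersection of the family of all
soft closed sets containing `F`. -/
def softClosure (τ : Set (A → Set X)) (F : A → Set X) : A → Set X :=
  SS (⋂ G ∈ {G : A → Set X | SoftClosed τ G ∧ Subset F G}, SE G)

theorem exists_mem_SE {F : A → Set X} (hF : ∀ a, (F a).Nonempty) {a : A} {y : X}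
    (hy : y ∈ F a) : ∃ x ∈ SE F, x a = y := by
  classical
  choose f hf using hF
  refine ⟨Function.update f a y, fun b => ?_, by simp⟩
  by_cases hb : b = a
  · subst hb
    simpa using hy
  · simpa [hb] using hf b

theorem MemSX.nonempty {F : A → Set X} (hF : MemSX F) {a : A} {y : X} (hy : y ∈ F a) :
    ∀ b, (F b).Nonempty := by
  rcases hF with rfl | h
  · exact hy.elim
  · exact h

theorem MemSX.SS_SE {F : A → Set X} (hF : MemSX F) : SS (SE F) = F := by
  funext a
  ext y
  constructor
  · rintro ⟨x, hx, rfl⟩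
    exact hx a
  · exact fun hy => exists_mem_SE (hF.nonempty hy) hy

/-- The elementary complement in the definition of soft closedness may be replaced by the
pointwise one, whose membership in `S(𝕏)` is then automatic. -/
theorem softClosed_iff {τ : Set (A → Set X)} (hτ : IsSoftTopology τ) {F : A → Set X} :
    SoftClosed τ F ↔ MemSX F ∧ (fun a => (F a)ᶜ) ∈ τ := by
  -- `eCompl F` is by definition `SS (SE Fᶜ)`.
  have key : MemSX (fun a => (F a)ᶜ) → eCompl F = fun a => (F a)ᶜ := fun h => h.SS_SE
  constructor
  · rintro ⟨h, hc, hm⟩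
    exact ⟨h, key hc ▸ hm⟩
  · rintro ⟨h, hm⟩
    have hc := hτ.memSX _ hm
    exact ⟨h, hc, (key hc).symm ▸ hm⟩

theorem iUnion_mem {τ : Set (A → Set X)} (hτ : IsSoftTopology τ) {ι : Type*}
    {F : ι → A → Set X} (hF : ∀ i, F i ∈ τ) : (fun a => ⋃ i, F i a) ∈ τ := by
  have h := hτ.union_mem (Set.range F) (Set.range_subset_iff.2 hF)
  convert h using 1
  funext a
  ext y
  simp only [Set.mem_iUnion, SS, Set.mem_ofPred_eq, Set.biUnion_range]
  constructor
  · rintro ⟨i, hi⟩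
    obtain ⟨x, hx, rfl⟩ := exists_mem_SE ((hτ.memSX _ (hF i)).nonempty hi) hi
    exact ⟨x, ⟨i, hx⟩, rfl⟩
  · rintro ⟨x, ⟨i, hx⟩, rfl⟩
    exact ⟨i, hx a⟩

theorem softClosed_null {τ : Set (A → Set X)} (hτ : IsSoftTopology τ) : SoftClosed τ Null := by
  refine (softClosed_iff hτ).2 ⟨Or.inl rfl, ?_⟩
  simpa +unfoldPartialApp only [Null, Abs, Set.compl_empty] using hτ.abs_mem

theorem softClosed_abs [Nonempty X] {τ : Set (A → Set X)} (hτ : IsSoftTopology τ) :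
    SoftClosed τ Abs := by
  refine (softClosed_iff hτ).2 ⟨Or.inr fun _ => Set.univ_nonempty, ?_⟩
  simpa +unfoldPartialApp only [Null, Abs, Set.compl_univ] using hτ.null_mem

/-- The family has a common soft element exactly when its pointwise intersection is everywhere
nonempty; without one, the elementary intersection is null even if the pointwise one is not. -/
theorem eInter_eq {ι : Type*} (F : ι → A → Set X) :
    eInter F = Null ∨ (eInter F = (fun a => ⋂ i, F i a) ∧ ∀ a, (⋂ i, F i a).Nonempty) := by
  have hSE : (⋂ i, SE (F i)) = SE (fun a => ⋂ i, F i a) := by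
    ext x
    simp only [SE, Set.mem_iInter, Set.mem_ofPred_eq]
    exact forall_comm
  unfold eInter
  rw [hSE]
  rcases (SE (fun a => ⋂ i, F i a)).eq_empty_or_nonempty with h | ⟨x, hx⟩
  · left
    rw [h]
    funext a
    simp [SS, Null]
  · have hne : ∀ a, (⋂ i, F i a).Nonempty := fun a => ⟨x a, hx a⟩
    exact Or.inr ⟨MemSX.SS_SE (Or.inr hne), hne⟩

theorem softClosed_null_abs_and_eInter [Nonempty X] [Nonempty A]
    (τ : Set (A → Set X)) (hτ : IsSoftTopology τ) :
    (SoftClosed τ Null ∧ SoftClosed τ Abs) ∧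
      ∀ {ι : Type} (Y : ι → A → Set X),
        (∀ i, SoftClosed τ (Y i)) → SoftClosed τ (eInter Y) := by
  refine ⟨⟨softClosed_null hτ, softClosed_abs hτ⟩, fun {ι} Y hY => ?_⟩
  rcases eInter_eq Y with h | ⟨h, hne⟩
  · rw [h]
    exact softClosed_null hτ
  · rw [h]
    refine (softClosed_iff hτ).2 ⟨Or.inr hne, ?_⟩
    simpa only [Set.compl_iInter] using
      iUnion_mem hτ fun i => ((softClosed_iff hτ).1 (hY i)).2

end SoftPaper
end

section
/- Let τ be a soft topology on (X, A) and let F ∈ S(𝕏) be soft closed. Then every limiting soft element x of F belongs to F, i.e., if x : A → X satisfies: for every G ∈ τ and every a ∈ A, x a ∈ G a implies F a ∩ (G a \ {x a}) is nonempty, then x a ∈ F a for all a ∈ A. -/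
/-!
If `x a ∉ F a` for some `a`, then the pointwise complement of `F` is not null, hence nonempty at
every parameter because it lies in `S(𝕏)`. Choosing a point of each `(F b)ᶜ` and using `x a` at `a`
gives a soft element avoiding `F`, so the soft open set `F^ℂ` contains `x a` at `a`. But
`F^ℂ a` is disjoint from `F a`, which contradicts `x` being a limiting soft element of `F`.
-/

namespace SoftPaper

variable {X Y A : Type*}

theorem softClosed_contains_limiting [Nonempty X] [Nonempty A]
    (τ : Set (A → Set X)) (hτ : IsSoftTopology τ)
    (F : A → Set X) (hF : SoftClosed τ F) (x : A → X)
    (hx : ∀ G ∈ τ, ∀ a, x a ∈ G a → (F a ∩ (G a \ {x a})).Nonempty) :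
    ∀ a, x a ∈ F a := by
  classical
  intro a
  by_contra ha
  -- `Fᶜ` is nonempty at `a`, so membership in `S(𝕏)` makes it nonempty at every parameter.
  have hne : ∀ b, ((F b)ᶜ).Nonempty := by
    rcases hF.2.1 with h | h
    · exact absurd (show x a ∈ (Null : A → Set X) a from h ▸ ha) (Set.notMem_empty _)
    · exact h
  choose y hy using hne
  -- Hence `x a` extends to a soft element avoiding `F`, that is, `x a ∈ F^ℂ a`.
  have hmem : x a ∈ eCompl F a := by
    refine ⟨Function.update y a (x a), fun b => ?_, Function.update_self ..⟩
    by_cases hb : b = a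
    · subst hb
      simpa using ha
    · simpa [hb] using hy b
  obtain ⟨z, hzF, ⟨w, hw, rfl⟩, -⟩ := hx _ hF.2.2 a hmem
  exact hw a hzF

end SoftPaper
end

section
/- Let Y also be a nonempty type, let τ be a soft topology on (X, A) and ν a soft topology on (Y, A), and let f : A → X → Y be a family of functions. Then f is soft continuous if and only if f⁻¹[V] ∈ τ for every V ∈ ν. -/
/-!
The forward direction recovers the inverse image of `V` as the elementary union of all open `U`
whose image lies in `V`: the soft elements of these `U` are exactly those sent into `V`.
Conversely, the inverse image of `V` itself serves as the open soft set witnessing continuity.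
-/

namespace SoftPaper

variable {X Y A : Type*}

/-- Image of a soft set under the soft function induced by `f`. -/
def softImage (f : A → X → Y) (F : A → Set X) : A → Set Y :=
  SS ((fun (x : A → X) (a : A) => f a (x a)) '' SE F)

/-- Inverse image of a soft set under the soft function induced by `f`. -/
def softPreimage (f : A → X → Y) (G : A → Set Y) : A → Set X :=
  SS {x : A → X | ∀ a, f a (x a) ∈ G a}

/-- Soft continuity of `f` at a soft element `x₀`. -/
def SoftContinuousAt (τ : Set (A → Set X)) (ν : Set (A → Set Y))
    (f : A → X → Y) (x₀ : A → X) : Prop :=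
  ∀ V ∈ ν, (fun a => f a (x₀ a)) ∈ SE V →
    ∃ U ∈ τ, x₀ ∈ SE U ∧ Subset (softImage f U) V

/-- Soft continuity of `f`. -/
def SoftContinuous (τ : Set (A → Set X)) (ν : Set (A → Set Y))
    (f : A → X → Y) : Prop :=
  ∀ x₀ : A → X, SoftContinuousAt τ ν f x₀

theorem softContinuous_iff_preimage_open [Nonempty X] [Nonempty Y] [Nonempty A]
    (τ : Set (A → Set X)) (ν : Set (A → Set Y))
    (hτ : IsSoftTopology τ) (hν : IsSoftTopology ν) (f : A → X → Y) :
    SoftContinuous τ ν f ↔ ∀ V ∈ ν, softPreimage f V ∈ τ := by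
  constructor
  · intro h V hV
    -- The open witnesses provided by continuity are members of this family.
    have key := hτ.union_mem {U | U ∈ τ ∧ Subset (softImage f U) V} fun _ hU => hU.1
    have heq : (⋃ U ∈ {U | U ∈ τ ∧ Subset (softImage f U) V}, SE U)
        = {x : A → X | ∀ a, f a (x a) ∈ V a} := by
      ext x
      simp only [Set.mem_iUnion, Set.mem_setOf_eq, exists_prop]
      constructor
      · rintro ⟨U, ⟨-, hUV⟩, hx⟩ a
        exact hUV a ⟨_, ⟨x, hx, rfl⟩, rfl⟩
      · intro hx
        obtain ⟨U, hU, hxU, hUV⟩ := h x V hV hx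
        exact ⟨U, ⟨hU, hUV⟩, hxU⟩
    rw [heq] at key
    exact key
  · intro h x V hV hx
    refine ⟨softPreimage f V, h V hV, fun a => ⟨x, hx, rfl⟩, ?_⟩
    rintro a _ ⟨_, ⟨z, hz, rfl⟩, rfl⟩
    -- A soft element of the preimage agrees, at each parameter separately, with some
    -- soft element mapped into `V`; this suffices because the claim is pointwise.
    obtain ⟨w, hw, hwz⟩ := hz a
    simpa only [← hwz] using hw a

end SoftPaper
end

section
/- Let τ be a soft topology on (X, A) that is soft T₁. Then for every soft element x : A → X, the soft set (x, A) given by a ↦ {x a} is soft closed. -/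
/-! Since `τ` is closed under elementary unions, it is enough to write the elementary complement of
`(x, A)` as an elementary union of soft open sets. The family of all soft open sets that avoid `x` at
every parameter works: a soft element of such a set differs from `x` everywhere, and conversely, by
soft `T₁`, every soft element differing from `x` everywhere lies in one of them. The pointwise
complement lies in `S(𝕏)` because it is null if `X` has one point and nowhere empty otherwise. -/

namespace SoftPaper

variable {X Y A : Type*}

/-- The soft `T₁` separation axiom. -/
def SoftT1 (τ : Set (A → Set X)) : Prop :=
  ∀ x y : A → X, (∀ a, x a ≠ y a) →
    ∃ F ∈ τ, ∃ G ∈ τ,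
      (∀ a, x a ∈ F a ∧ y a ∉ F a) ∧ (∀ a, y a ∈ G a ∧ x a ∉ G a)

theorem softClosed_singleton_of_T1 [Nonempty X] [Nonempty A]
    (τ : Set (A → Set X)) (hτ : IsSoftTopology τ) (h1 : SoftT1 τ) :
    ∀ x : A → X, SoftClosed τ (fun a => ({x a} : Set X)) := by
  intro x
  refine ⟨Or.inr fun a => Set.singleton_nonempty _, ?_, ?_⟩
  · rcases subsingleton_or_nontrivial X with hX | hX
    · left
      funext a
      ext y
      simp [Null, Subsingleton.elim y (x a)]
    · right
      intro a
      obtain ⟨y, hy⟩ := exists_ne (x a)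
      exact ⟨y, hy⟩
  · have key : {y : A → X | ∀ a, y a ∉ ({x a} : Set X)} =
        ⋃ F ∈ {F | F ∈ τ ∧ ∀ a, x a ∉ F a}, SE F := by
      ext y
      simp only [Set.mem_ofPred_eq, Set.mem_iUnion, Set.mem_singleton_iff, exists_prop]
      constructor
      · intro hy
        obtain ⟨-, -, G, hG, -, h⟩ := h1 x y fun a => Ne.symm (hy a)
        exact ⟨G, ⟨hG, fun a => (h a).2⟩, fun a => (h a).1⟩
      · rintro ⟨F, ⟨-, hF⟩, hy⟩ a hya
        exact hF a (hya ▸ hy a)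
    unfold eCompl
    rw [key]
    exact hτ.union_mem _ fun F hF => hF.1

end SoftPaper
end

section
/- Let τ be a soft topology on (X, A). If for every soft element x : A → X and every U ∈ τ with x ∈̃ U there exists V ∈ τ with x ∈̃ V and cl(V) ⊆̃ U, then τ is soft regular: for every soft closed set F and every soft element x with x a ∉ F a for all a, there exist G, H ∈ τ with F ⊆̃ G, x ∈̃ H, and G ⋒ H = Φ. -/
/-!
The open set `H = V` comes from the closure condition applied to `x` and the open set `eCompl F`,
and `G` is the elementary union of the elementary complements of all soft closed `K` containing
`V`, which is open by definition of a soft topology. A common soft element of `G` and `V` would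
have a value both outside and inside some such `K`, so `G` and `V` are elementary disjoint.
A point `y ∈ F a` is not in the closure of `V` at `a`; since `x` is a soft element of every `K`,
replacing the value of `x` at `a` by `y` shows that some `K` omits `y` at `a`. The condition
that `Kᶜ` is null or everywhere nonempty then provides a soft element of `Kᶜ` through `y`, so that
`y ∈ G a`.
-/

namespace SoftPaper

variable {X Y A : Type*}

/-- A point outside a soft closed set is a value of a soft element of its elementary complement. -/
theorem SoftClosed.exists_mem_SE_eCompl {τ : Set (A → Set X)} {K : A → Set X}
    (hK : SoftClosed τ K) {a : A} {y : X} (hy : y ∉ K a) : ∃ z ∈ SE (eCompl K), z a = y := by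
  classical
  rcases hK.2.1 with h0 | hne
  · have h1 : y ∈ (Null : A → Set X) a := by
      rw [← h0]
      exact hy
    exact h1.elim
  · choose z hz using hne
    have hmem : ∀ b, Function.update z a y b ∉ K b := by
      intro b
      by_cases hb : b = a
      · subst hb
        simpa using hy
      · simpa [hb] using hz b
    exact ⟨Function.update z a y, fun b => ⟨_, hmem, rfl⟩, by simp⟩

/-- If `V` has a soft element, a point outside its soft closure at `a` is omitted at `a` by some
soft closed set containing `V`. -/
theorem exists_softClosed_notMem {τ : Set (A → Set X)} {V : A → Set X} {x : A → X}
    (hx : x ∈ SE V) {a : A} {y : X} (hy : y ∉ softClosure τ V a) :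
    ∃ K, SoftClosed τ K ∧ Subset V K ∧ y ∉ K a := by
  classical
  by_contra! hcon
  refine hy ⟨Function.update x a y, ?_, by simp⟩
  refine Set.mem_iInter₂.2 fun K hK b => ?_
  by_cases hb : b = a
  · subst hb
    simpa using hcon K hK.1 hK.2
  · simpa [hb] using hK.2 b (hx b)

theorem softRegular_of_closure_condition [Nonempty X] [Nonempty A]
    (τ : Set (A → Set X)) (hτ : IsSoftTopology τ)
    (h : ∀ x : A → X, ∀ U ∈ τ, x ∈ SE U →
      ∃ V ∈ τ, x ∈ SE V ∧ Subset (softClosure τ V) U) :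
    ∀ F : A → Set X, SoftClosed τ F → ∀ x : A → X, (∀ a, x a ∉ F a) →
      ∃ G ∈ τ, ∃ H ∈ τ, Subset F G ∧ x ∈ SE H ∧ eInter2 G H = Null := by
  intro F hF x hxF
  obtain ⟨V, hV, hxV, hVF⟩ := h x (eCompl F) hF.2.2 fun a => ⟨x, hxF, rfl⟩
  refine ⟨_, hτ.union_mem (eCompl '' {K | SoftClosed τ K ∧ Subset V K}) ?_, V, hV, ?_, hxV, ?_⟩
  · rintro _ ⟨K, hK, rfl⟩
    exact hK.1.2.2
  · intro a y hy
    have hycl : y ∉ softClosure τ V a := by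
      intro hc
      obtain ⟨z, hz, rfl⟩ := hVF a hc
      exact hz a hy
    obtain ⟨K, hK, hVK, hyK⟩ := exists_softClosed_notMem hxV hycl
    obtain ⟨z, hz, hzy⟩ := hK.exists_mem_SE_eCompl hyK
    exact ⟨z, Set.mem_iUnion₂.2 ⟨_, ⟨K, ⟨hK, hVK⟩, rfl⟩, hz⟩, hzy⟩
  · funext a
    refine Set.eq_empty_iff_forall_notMem.2 ?_
    rintro _ ⟨w, ⟨hwG, hwV⟩, rfl⟩
    obtain ⟨z, hz, hzw⟩ := hwG a
    obtain ⟨_, ⟨K, hK, rfl⟩, hzK⟩ := Set.mem_iUnion₂.1 hz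
    obtain ⟨u, hu, huz⟩ := hzK a
    refine hu a (hK.2 a ?_)
    rw [huz, hzw]
    exact hwV a

end SoftPaper
end
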